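/- arXiv:1907.07926 — 2 statements merged into one kernel-verified Lean document; each statement's English description precedes it below -/
import Mathlib

section
/- Let 2 < q < 4 and μ > 0. Then the functional D_q is bounded below and has negative infimum on the mass-constraint set: there exists C ∈ ℝ such that D_q(u) ≥ C for every u ∈ H¹(ℝ) with ‖u‖₂² = μ, and there exists u₀ ∈ H¹(ℝ) with ‖u₀‖₂² = μ and D_q(u₀) < 0. -/
open MeasureTheory Real Set

noncomputable section

/-- `u ∈ H¹(ℝ)` with weak derivative `u'`: `u` is continuous, square-integrable,
`u'` is square-integrable, and `u(b) − u(a) = ∫_a^b u'(t) dt` for all `a ≤ b`. -/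
def IsH1 (u u' : ℝ → ℝ) : Prop :=
  Continuous u ∧ Integrable (fun x => (u x) ^ 2) ∧ Integrable (fun x => (u' x) ^ 2) ∧
    ∀ a b : ℝ, a ≤ b → u b - u a = ∫ t in a..b, u' t

/-- The mass `‖u‖₂² = ∫_ℝ u(x)² dx`. -/
def mass (u : ℝ → ℝ) : ℝ := ∫ x, (u x) ^ 2

/-- `D_q(u) = (1/2)∫ u'² − (1/q)|u(0)|^q`. -/
def Dfun (q : ℝ) (u u' : ℝ → ℝ) : ℝ :=
  (1 / 2) * (∫ x, (u' x) ^ 2) - (1 / q) * |u 0| ^ q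

/-- `F_{p,q}(u) = (1/2)∫ u'² − (1/p)∫ |u|^p − (1/q)|u(0)|^q`. -/
def Ffun (p q : ℝ) (u u' : ℝ → ℝ) : ℝ :=
  (1 / 2) * (∫ x, (u' x) ^ 2) - (1 / p) * (∫ x, |u x| ^ p) - (1 / q) * |u 0| ^ q

/-! If `|u(y)| = s`, then `|u(x) - u(y)|² ≤ |x - y| ‖u'‖²` keeps `u` comparable to `s` on an
interval of length of order `s² / ‖u'‖²`. Such a plateau has mass of order `s⁴ / ‖u'‖²`, so `s⁴` is
at most a constant times `‖u‖² ‖u'‖²`. At fixed mass the nonlinear term `|u(0)|^q` therefore grows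
strictly slower than the kinetic term when `q < 4`, and `D_q` is bounded below.

The peaks `a e^{-k|x|}` have mass `a² / k` and kinetic energy `a² k`. At mass `μ` this forces
`k = a² / μ`, hence a kinetic energy `a⁴ / μ`, which is negligible against `a^q` for small `a`. -/

section RealPower

lemma exists_pos_rpow_eq {r c : ℝ} (hr : r ≠ 0) (hc : 0 < c) : ∃ x : ℝ, 0 < x ∧ x ^ r = c :=
  ⟨c ^ r⁻¹, rpow_pos_of_pos hc _, rpow_inv_rpow hc.le hr⟩

lemma rpow_mul_rpow_le_rpow_add_rpow {x y p q : ℝ} (hx : 0 ≤ x) (hy : 0 ≤ y) (hp : 0 ≤ p)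
    (hq : 0 ≤ q) : x ^ p * y ^ q ≤ x ^ (p + q) + y ^ (p + q) := by
  have hm : 0 ≤ max x y := le_max_of_le_left hx
  calc x ^ p * y ^ q
      ≤ max x y ^ p * max x y ^ q := by
        gcongr
        exacts [le_max_left x y, le_max_right x y]
    _ = max x y ^ (p + q) := (rpow_add_of_nonneg hm hp hq).symm
    _ ≤ x ^ (p + q) + y ^ (p + q) := by
        rcases max_choice x y with h | h <;> rw [h]
        · exact le_add_of_nonneg_right (rpow_nonneg hy _)
        · exact le_add_of_nonneg_left (rpow_nonneg hx _)

end RealPower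

section CauchySchwarz

-- Integrability of `f ^ 2` does not make `f` measurable; a non-integrable `f` has integral `0`.
lemma sq_integral_le_measureReal_univ_mul {α : Type*} [MeasurableSpace α] {ν : Measure α}
    [IsFiniteMeasure ν] {f : α → ℝ} (hf : Integrable (fun x => f x ^ 2) ν) :
    (∫ x, f x ∂ν) ^ 2 ≤ ν.real univ * ∫ x, f x ^ 2 ∂ν := by
  by_cases hi : Integrable f ν
  · have hi_sub (t : ℝ) : Integrable (fun x => f x ^ 2 - 2 * t * f x) ν := hf.sub (hi.const_mul _)
    have h_quad (t : ℝ) : 0 ≤ ν.real univ * (t * t) + (-2 * ∫ x, f x ∂ν) * t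
        + ∫ x, f x ^ 2 ∂ν :=
      calc 0 ≤ ∫ x, (f x - t) ^ 2 ∂ν := integral_nonneg fun x => sq_nonneg _
        _ = ∫ x, (f x ^ 2 - 2 * t * f x + t ^ 2) ∂ν := by congr with x; ring
        _ = (∫ x, f x ^ 2 ∂ν) - 2 * t * (∫ x, f x ∂ν) + ν.real univ * t ^ 2 := by
          rw [integral_add (hi_sub t) (integrable_const _),
            integral_sub hf (hi.const_mul _), integral_const_mul, integral_const, smul_eq_mul]
        _ = _ := by ring
    have h_discrim := discrim_le_zero h_quad
    rw [discrim] at h_discrim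
    linarith
  · rw [integral_undef hi, zero_pow two_ne_zero]
    exact mul_nonneg measureReal_nonneg (integral_nonneg fun x => sq_nonneg _)

lemma sq_intervalIntegral_le {f : ℝ → ℝ} {a b : ℝ} (hab : a ≤ b)
    (hf : IntegrableOn (fun x => f x ^ 2) (Ioc a b)) :
    (∫ x in a..b, f x) ^ 2 ≤ (b - a) * ∫ x in a..b, f x ^ 2 := by
  simpa [intervalIntegral.integral_of_le hab, hab] using sq_integral_le_measureReal_univ_mul hf

lemma intervalIntegral_sq_le_integral_sq {f : ℝ → ℝ} (hf : Integrable (fun x => f x ^ 2))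
    {a b : ℝ} (hab : a ≤ b) : ∫ x in a..b, f x ^ 2 ≤ ∫ x, f x ^ 2 := by
  rw [intervalIntegral.integral_of_le hab]
  exact setIntegral_le_integral hf (ae_of_all _ fun x => sq_nonneg (f x))

end CauchySchwarz

namespace IsH1

variable {u u' : ℝ → ℝ}

lemma sq_sub_le (h : IsH1 u u') {a b : ℝ} (hab : a ≤ b) :
    (u b - u a) ^ 2 ≤ (b - a) * ∫ x, u' x ^ 2 := by
  obtain ⟨-, -, hu', hftc⟩ := h
  have := sub_nonneg.2 hab
  calc (u b - u a) ^ 2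
      = (∫ x in a..b, u' x) ^ 2 := by rw [hftc a b hab]
    _ ≤ (b - a) * ∫ x in a..b, u' x ^ 2 := sq_intervalIntegral_le hab hu'.integrableOn
    _ ≤ (b - a) * ∫ x, u' x ^ 2 := by gcongr; exact intervalIntegral_sq_le_integral_sq hu' hab

lemma mul_sq_le (h : IsH1 u u') (y : ℝ) {L : ℝ} (hL : 0 ≤ L) :
    L * u y ^ 2 ≤ 2 * mass u + L ^ 2 * ∫ x, u' x ^ 2 := by
  have hcont : Continuous u := h.1
  set T := ∫ x, u' x ^ 2
  have hyL : y ≤ y + L := le_add_of_nonneg_right hL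
  have h_pointwise (x : ℝ) (hx : x ∈ Icc y (y + L)) :
      u y ^ 2 ≤ 2 * u x ^ 2 + 2 * T * (x - y) := by
    linarith [h.sq_sub_le hx.1, sq_nonneg (2 * u x - u y)]
  calc L * u y ^ 2
      = ∫ _ in y..y + L, u y ^ 2 := by simp
    _ ≤ ∫ x in y..y + L, (2 * u x ^ 2 + 2 * T * (x - y)) :=
        intervalIntegral.integral_mono_on hyL intervalIntegrable_const
          (Continuous.intervalIntegrable (by fun_prop) _ _) h_pointwise
    _ = 2 * (∫ x in y..y + L, u x ^ 2) + L ^ 2 * T := by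
        rw [intervalIntegral.integral_add (Continuous.intervalIntegrable (by fun_prop) _ _)
          (Continuous.intervalIntegrable (by fun_prop) _ _), intervalIntegral.integral_const_mul,
          intervalIntegral.integral_const_mul,
          intervalIntegral.integral_comp_sub_right (fun x => x), integral_id]
        ring
    _ ≤ 2 * mass u + L ^ 2 * T := by
        gcongr
        exact intervalIntegral_sq_le_integral_sq h.2.1 hyL

lemma pow_four_le (h : IsH1 u u') (y : ℝ) : u y ^ 4 ≤ 8 * mass u * ∫ x, u' x ^ 2 := by
  have hmass : 0 ≤ mass u := integral_nonneg fun x => sq_nonneg _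
  have hT : 0 ≤ ∫ x, u' x ^ 2 := integral_nonneg fun x => sq_nonneg _
  have h_quad (L : ℝ) : 0 ≤ (∫ x, u' x ^ 2) * (L * L) + (-u y ^ 2) * L + 2 * mass u := by
    rcases le_total 0 L with hL | hL
    · linarith [h.mul_sq_le y hL]
    · have := mul_nonneg hT (mul_self_nonneg L)
      have := mul_nonneg (sq_nonneg (u y)) (neg_nonneg.2 hL)
      linarith
  have h_discrim := discrim_le_zero h_quad
  rw [discrim] at h_discrim
  linarith

end IsH1

lemma exists_le_Dfun {q : ℝ} (hq : 0 < q) (hq' : q < 4) {μ : ℝ} (hμ : 0 < μ) :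
    ∃ C : ℝ, ∀ u u' : ℝ → ℝ, IsH1 u u' → mass u ≤ μ → C ≤ Dfun q u u' := by
  obtain ⟨M, hM, hM_eq⟩ : ∃ M : ℝ, 0 < M ∧ M ^ (4 - q) = 16 * μ / q :=
    exists_pos_rpow_eq (by linarith) (by positivity)
  refine ⟨-(M ^ 4 / (16 * μ)), fun u u' h hmass => ?_⟩
  have h_young : |u 0| ^ q * M ^ (4 - q) ≤ u 0 ^ 4 + M ^ 4 := by
    have := rpow_mul_rpow_le_rpow_add_rpow (abs_nonneg (u 0)) hM.le hq.le (sub_nonneg.2 hq'.le)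
    rwa [add_sub_cancel, rpow_ofNat, rpow_ofNat, Even.pow_abs (by decide)] at this
  have h_nonlinear : 1 / q * |u 0| ^ q ≤ 1 / 2 * (∫ x, u' x ^ 2) + M ^ 4 / (16 * μ) :=
    calc 1 / q * |u 0| ^ q
        = |u 0| ^ q * M ^ (4 - q) / (16 * μ) := by rw [hM_eq]; field_simp
      _ ≤ (8 * μ * (∫ x, u' x ^ 2) + M ^ 4) / (16 * μ) := by
          gcongr
          exact h_young.trans (by grw [h.pow_four_le 0, hmass])
      _ = 1 / 2 * (∫ x, u' x ^ 2) + M ^ 4 / (16 * μ) := by field_simp; ring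
  rw [Dfun]
  linarith

section ExpPeak

lemma integral_exp_neg_mul_abs {k : ℝ} (hk : 0 < k) : ∫ x : ℝ, exp (-k * |x|) = 2 / k := by
  rw [integral_comp_abs (f := fun x => exp (-k * x)), integral_exp_mul_Ioi (neg_lt_zero.2 hk)]
  simp [field]

lemma integrable_exp_neg_mul_abs {k : ℝ} (hk : 0 < k) : Integrable fun x : ℝ => exp (-k * |x|) :=
  .of_integral_ne_zero (by rw [integral_exp_neg_mul_abs hk]; positivity)

lemma monotone_coe_sign : Monotone fun x : ℝ => (SignType.sign x : ℝ) := by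
  have h_cast : Monotone ((↑) : SignType → ℝ) := by
    intro s t
    cases s <;> cases t <;> simp
  exact h_cast.comp SignType.sign.monotone

/-- The peak `a e^{-k|x|}` of height `a` at the origin, used as a trial function for `D_q`. -/
def expPeak (a k x : ℝ) : ℝ := a * exp (-k * |x|)

/-- The weak derivative of `expPeak a k`, with the value `0` at the corner. -/
def expPeakDeriv (a k x : ℝ) : ℝ := SignType.sign x * (-k * expPeak a k x)

variable {a k : ℝ}

lemma continuous_expPeak : Continuous (expPeak a k) := by
  unfold expPeak
  fun_prop

lemma expPeak_sq (x : ℝ) : expPeak a k x ^ 2 = a ^ 2 * exp (-(2 * k) * |x|) := by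
  rw [expPeak, mul_pow, ← exp_nat_mul]
  ring_nf

lemma integrable_expPeak_sq (hk : 0 < k) : Integrable fun x => expPeak a k x ^ 2 := by
  simp_rw [expPeak_sq]
  exact (integrable_exp_neg_mul_abs (by positivity)).const_mul _

lemma mass_expPeak (hk : 0 < k) : mass (expPeak a k) = a ^ 2 / k := by
  simp_rw [mass, expPeak_sq]
  rw [integral_const_mul, integral_exp_neg_mul_abs (by positivity)]
  field

lemma expPeakDeriv_sq_ae_eq :
    (fun x => expPeakDeriv a k x ^ 2) =ᵐ[volume] fun x => k ^ 2 * expPeak a k x ^ 2 := by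
  filter_upwards [Measure.ae_ne volume 0] with x hx
  rcases hx.lt_or_gt with hx | hx <;> simp [expPeakDeriv, hx, mul_pow]

lemma integral_expPeakDeriv_sq (hk : 0 < k) : ∫ x, expPeakDeriv a k x ^ 2 = a ^ 2 * k := by
  rw [integral_congr_ae expPeakDeriv_sq_ae_eq, integral_const_mul, ← mass, mass_expPeak hk]
  field

lemma hasDerivAt_expPeak {x : ℝ} (hx : x ≠ 0) :
    HasDerivAt (expPeak a k) (expPeakDeriv a k x) x := by
  refine (((hasDerivAt_abs hx).const_mul (-k)).exp.const_mul a).congr_deriv ?_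
  rw [expPeakDeriv, expPeak]
  ring

lemma intervalIntegrable_expPeakDeriv (b c : ℝ) :
    IntervalIntegrable (expPeakDeriv a k) volume b c :=
  monotone_coe_sign.intervalIntegrable.mul_continuousOn
    (continuous_expPeak.const_mul (-k)).continuousOn

lemma isH1_expPeak (hk : 0 < k) : IsH1 (expPeak a k) (expPeakDeriv a k) := by
  refine ⟨continuous_expPeak, integrable_expPeak_sq hk, ?_, fun b c hbc => ?_⟩
  · exact ((integrable_expPeak_sq hk).const_mul _).congr expPeakDeriv_sq_ae_eq.symm
  · exact (integral_eq_of_hasDerivAt_off_countable_of_le _ _ hbc (countable_singleton 0)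
      continuous_expPeak.continuousOn (fun x hx => hasDerivAt_expPeak hx.2)
      (intervalIntegrable_expPeakDeriv b c)).symm

lemma Dfun_expPeak (q : ℝ) (hk : 0 < k) :
    Dfun q (expPeak a k) (expPeakDeriv a k) = 1 / 2 * (a ^ 2 * k) - 1 / q * |a| ^ q := by
  simp [Dfun, integral_expPeakDeriv_sq hk, expPeak]

end ExpPeak

lemma exists_Dfun_neg {q : ℝ} (hq : 0 < q) (hq' : q < 4) {μ : ℝ} (hμ : 0 < μ) :
    ∃ u u' : ℝ → ℝ, IsH1 u u' ∧ mass u = μ ∧ Dfun q u u' < 0 := by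
  obtain ⟨a, ha, ha_eq⟩ : ∃ a : ℝ, 0 < a ∧ a ^ (4 - q) = μ / q :=
    exists_pos_rpow_eq (by linarith) (by positivity)
  have hk : 0 < a ^ 2 / μ := by positivity
  refine ⟨expPeak a (a ^ 2 / μ), expPeakDeriv a (a ^ 2 / μ), isH1_expPeak hk, ?_, ?_⟩
  · rw [mass_expPeak hk]
    field
  · have h_pow : a ^ 4 = μ / q * a ^ q := by
      rw [← ha_eq, ← rpow_add ha, sub_add_cancel, rpow_ofNat]
    have h_kinetic : a ^ 2 * (a ^ 2 / μ) = 1 / q * a ^ q :=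
      calc a ^ 2 * (a ^ 2 / μ) = a ^ 4 / μ := by ring
        _ = 1 / q * a ^ q := by rw [h_pow]; field
    have h_nonlinear_pos : 0 < 1 / q * a ^ q := by positivity
    rw [Dfun_expPeak q hk, abs_of_pos ha, h_kinetic]
    linarith

theorem stmt0_general (q μ : ℝ) (hq : 0 < q) (hq' : q < 4) (hμ : 0 < μ) :
    (∃ C : ℝ, ∀ u u' : ℝ → ℝ, IsH1 u u' → mass u = μ → C ≤ Dfun q u u') ∧
    (∃ u₀ u₀' : ℝ → ℝ, IsH1 u₀ u₀' ∧ mass u₀ = μ ∧ Dfun q u₀ u₀' < 0) := by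
  obtain ⟨C, hC⟩ := exists_le_Dfun hq hq' hμ
  exact ⟨⟨C, fun u u' h hmass => hC u u' h hmass.le⟩, exists_Dfun_neg hq hq' hμ⟩

theorem stmt0 (q μ : ℝ) (hq : 2 < q) (hq' : q < 4) (hμ : 0 < μ) :
    (∃ C : ℝ, ∀ u u' : ℝ → ℝ, IsH1 u u' → mass u = μ → C ≤ Dfun q u u') ∧
    (∃ u₀ u₀' : ℝ → ℝ, IsH1 u₀ u₀' ∧ mass u₀ = μ ∧ Dfun q u₀ u₀' < 0) :=
  stmt0_general q μ (two_pos.trans hq) hq' hμ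
end
end

section
/- Let 0 < μ ≤ 2. Then D_4(u) ≥ 0 for every u ∈ H¹(ℝ) with ‖u‖₂² = μ, and the infimum of D_4 on this constraint set equals 0: for every ε > 0 there exists u ∈ H¹(ℝ) with ‖u‖₂² = μ and D_4(u) < ε. -/
open MeasureTheory Real Set

noncomputable section

/-!
For `u ∈ H¹(ℝ)`, integrating `(u²)' = 2 u u'` from both ends towards `x` gives
`u(x)² ≤ ∫ |u| |u'|`, and Cauchy–Schwarz turns this into the sharp trace inequality
`u(x)⁴ ≤ ‖u‖₂² ‖u'‖₂²`. Hence `D_4(u) ≥ (1/2) (1 - ‖u‖₂²/2) ‖u'‖₂²`. For the infimum,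
`√t u(t ·)` has the mass of `u`, while its kinetic energy carries a factor `t²`.
-/

lemma sq_integral_abs_mul_abs_le {α : Type*} [MeasurableSpace α] {ν : Measure α} {f g : α → ℝ}
    (hf : MemLp f 2 ν) (hg : MemLp g 2 ν) :
    (∫ x, |f x| * |g x| ∂ν) ^ 2 ≤ (∫ x, f x ^ 2 ∂ν) * ∫ x, g x ^ 2 ∂ν := by
  have holder := integral_mul_norm_le_Lp_mul_Lq (μ := ν) (f := f) (g := g)
    Real.HolderConjugate.two_two (by simpa using hf) (by simpa using hg)
  simp only [Real.norm_eq_abs, Real.rpow_two, sq_abs, ← Real.sqrt_eq_rpow] at holder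
  rw [← Real.sqrt_mul (integral_nonneg fun x => sq_nonneg (f x))] at holder
  exact (Real.le_sqrt (by positivity) (by positivity)).mp holder

lemma intervalIntegrable_of_locallyIntegrable {E : Type*} [NormedAddCommGroup E] {ν : Measure ℝ}
    {f : ℝ → E} (hf : LocallyIntegrable f ν) (a b : ℝ) : IntervalIntegrable f ν a b :=
  intervalIntegrable_iff.mpr
    ((hf.integrableOn_isCompact isCompact_uIcc).mono_set uIoc_subset_uIcc)

lemma absolutelyContinuousOnInterval_of_dist_le {X Y : Type*} [PseudoMetricSpace X]
    [PseudoMetricSpace Y] {f : ℝ → X} {g : ℝ → Y} {a b : ℝ}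
    (hg : AbsolutelyContinuousOnInterval g a b)
    (hfg : ∀ x ∈ uIcc a b, ∀ y ∈ uIcc a b, dist (f x) (f y) ≤ dist (g x) (g y)) :
    AbsolutelyContinuousOnInterval f a b := by
  refine squeeze_zero' (.of_forall fun _ => Finset.sum_nonneg fun _ _ => dist_nonneg) ?_ hg
  filter_upwards [Filter.mem_inf_of_right (Filter.mem_principal_self _)] with I hI
  exact Finset.sum_le_sum fun i hi => hfg _ (hI.1 i hi).1 _ (hI.1 i hi).2

section DominatedIncrements

variable {u g : ℝ → ℝ}

lemma absolutelyContinuousOnInterval_of_abs_sub_le_integral (hg : LocallyIntegrable g)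
    (hu : ∀ a b, a ≤ b → |u b - u a| ≤ ∫ t in a..b, g t) (a b : ℝ) :
    AbsolutelyContinuousOnInterval u a b := by
  have hgi := intervalIntegrable_of_locallyIntegrable hg
  refine absolutelyContinuousOnInterval_of_dist_le
    ((hgi a b).absolutelyContinuousOnInterval_intervalIntegral left_mem_uIcc)
    fun x _ y _ => ?_
  rw [Real.dist_eq, Real.dist_eq,
    intervalIntegral.integral_interval_sub_left (hgi a x) (hgi a y)]
  rcases le_total y x with hyx | hxy
  · exact (hu y x hyx).trans (le_abs_self _)
  · rw [abs_sub_comm, intervalIntegral.integral_symm, abs_neg]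
    exact (hu x y hxy).trans (le_abs_self _)

lemma ae_abs_deriv_le_of_abs_sub_le_integral (hg : LocallyIntegrable g)
    (hu : ∀ a b, a ≤ b → |u b - u a| ≤ ∫ t in a..b, g t) :
    ∀ᵐ x, DifferentiableAt ℝ u x → |deriv u x| ≤ g x := by
  have hgi := intervalIntegrable_of_locallyIntegrable hg
  have hsub (x y : ℝ) : (∫ t in (0)..y, g t) - ∫ t in (0)..x, g t = ∫ t in x..y, g t :=
    intervalIntegral.integral_interval_sub_left (hgi 0 y) (hgi 0 x)
  have mono_sub : Monotone fun x => (∫ t in (0)..x, g t) - u x := fun x y hxy => by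
    linarith [hsub x y, (abs_le.mp (hu x y hxy)).2]
  have mono_add : Monotone fun x => (∫ t in (0)..x, g t) + u x := fun x y hxy => by
    linarith [hsub x y, (abs_le.mp (hu x y hxy)).1]
  filter_upwards [_root_.LocallyIntegrable.ae_hasDerivAt_integral hg] with x hx hux
  have deriv_sub_nonneg := mono_sub.deriv_nonneg (x := x)
  have deriv_add_nonneg := mono_add.deriv_nonneg (x := x)
  rw [((hx 0).fun_sub hux.hasDerivAt).deriv] at deriv_sub_nonneg
  rw [((hx 0).fun_add hux.hasDerivAt).deriv] at deriv_add_nonneg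
  exact abs_le.mpr ⟨by linarith, by linarith⟩

lemma abs_sq_sub_sq_le_of_abs_sub_le_integral (hg : LocallyIntegrable g)
    (hu : ∀ a b, a ≤ b → |u b - u a| ≤ ∫ t in a..b, g t) {a b : ℝ} (hab : a ≤ b) :
    |u b ^ 2 - u a ^ 2| ≤ 2 * ∫ t in a..b, |u t| * g t := by
  have hac := absolutelyContinuousOnInterval_of_abs_sub_le_integral hg hu a b
  have ftc : u b ^ 2 - u a ^ 2 = ∫ t in a..b, deriv u t * u t + u t * deriv u t := by
    rw [hac.integral_deriv_mul_eq_sub hac]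
    ring
  rw [ftc, ← Real.norm_eq_abs, ← intervalIntegral.integral_const_mul]
  refine intervalIntegral.norm_integral_le_of_norm_le hab ?_ ?_
  · filter_upwards [ae_abs_deriv_le_of_abs_sub_le_integral hg hu, hac.ae_differentiableAt]
      with x hderiv hdiff hx
    have hle := hderiv (hdiff (Ioc_subset_Icc_self.trans Icc_subset_uIcc hx))
    calc ‖deriv u x * u x + u x * deriv u x‖ = 2 * (|u x| * |deriv u x|) := by
          rw [mul_comm (deriv u x), ← two_mul, Real.norm_eq_abs, abs_mul, abs_mul, abs_two]
      _ ≤ 2 * (|u x| * g x) := by gcongr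
  · have hgi := intervalIntegrable_of_locallyIntegrable hg a b
    exact (hgi.continuousOn_mul hac.continuousOn.abs).const_mul 2

end DominatedIncrements

lemma mass_nonneg (f : ℝ → ℝ) : 0 ≤ mass f :=
  integral_nonneg fun _ => sq_nonneg _

lemma mass_mul_comp_mul_left (c t : ℝ) (f : ℝ → ℝ) :
    mass (fun x => c * f (t * x)) = c ^ 2 * |t|⁻¹ * mass f := by
  simp only [mass, mul_pow]
  rw [integral_const_mul, Measure.integral_comp_mul_left (fun y => f y ^ 2), abs_inv, smul_eq_mul,
    mul_assoc]

lemma Dfun_four (u u' : ℝ → ℝ) : Dfun 4 u u' = 1 / 2 * mass u' - 1 / 4 * u 0 ^ 4 := by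
  have hpow : |u 0| ^ (4 : ℝ) = u 0 ^ 4 := by
    rw [← Nat.cast_ofNat, Real.rpow_natCast, Even.pow_abs (by decide)]
  rw [Dfun, hpow, mass]

lemma Dfun_le_half_mass {q : ℝ} (hq : 0 ≤ q) (u u' : ℝ → ℝ) : Dfun q u u' ≤ 1 / 2 * mass u' :=
  sub_le_self _ (by positivity)

namespace IsH1

variable {u u' : ℝ → ℝ}

lemma memLp (h : IsH1 u u') : MemLp u 2 :=
  (memLp_two_iff_integrable_sq h.1.aestronglyMeasurable).mpr h.2.1

-- `IsH1` does not make `u'` measurable (where it is not integrable, its interval integral is the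
-- junk value `0`), but `|u'| = √(u'²)` always is, and its integral dominates the increments of `u`.
lemma memLp_abs_deriv (h : IsH1 u u') : MemLp (fun x => |u' x|) 2 := by
  have hmeas : AEStronglyMeasurable (fun x => |u' x|) := by
    simpa only [Real.sqrt_sq_eq_abs] using
      Real.continuous_sqrt.comp_aestronglyMeasurable h.2.2.1.aestronglyMeasurable
  exact (memLp_two_iff_integrable_sq hmeas).mpr (by simpa only [sq_abs] using h.2.2.1)

lemma sub_eq_integral (h : IsH1 u u') (a b : ℝ) : u b - u a = ∫ t in a..b, u' t := by
  rcases le_total a b with hab | hba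
  · exact h.2.2.2 a b hab
  · rw [intervalIntegral.integral_symm, ← h.2.2.2 b a hba, neg_sub]

lemma abs_sub_le_integral_abs_deriv (h : IsH1 u u') {a b : ℝ} (hab : a ≤ b) :
    |u b - u a| ≤ ∫ t in a..b, |u' t| := by
  rw [h.sub_eq_integral]
  exact intervalIntegral.abs_integral_le_integral_abs hab

lemma integrable_abs_mul_abs_deriv (h : IsH1 u u') : Integrable fun x => |u x| * |u' x| :=
  h.memLp.abs.integrable_mul h.memLp_abs_deriv

lemma abs_sq_sub_sq_le (h : IsH1 u u') {a b : ℝ} (hab : a ≤ b) :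
    |u b ^ 2 - u a ^ 2| ≤ 2 * ∫ t in a..b, |u t| * |u' t| :=
  abs_sq_sub_sq_le_of_abs_sub_le_integral (h.memLp_abs_deriv.locallyIntegrable one_le_two)
    (fun _ _ => h.abs_sub_le_integral_abs_deriv) hab

lemma two_mul_sq_le (h : IsH1 u u') {a x b : ℝ} (hax : a ≤ x) (hxb : x ≤ b) :
    2 * u x ^ 2 ≤ u a ^ 2 + u b ^ 2 + 2 * ∫ t, |u t| * |u' t| := by
  have hii (c d : ℝ) : IntervalIntegrable (fun t => |u t| * |u' t|) volume c d :=
    h.integrable_abs_mul_abs_deriv.intervalIntegrable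
  have left_bound := (abs_le.mp (h.abs_sq_sub_sq_le hax)).2
  have right_bound := (abs_le.mp (h.abs_sq_sub_sq_le hxb)).1
  have split := intervalIntegral.integral_add_adjacent_intervals (hii a x) (hii x b)
  have enlarge : ∫ t in a..b, |u t| * |u' t| ≤ ∫ t, |u t| * |u' t| := by
    rw [intervalIntegral.integral_of_le (hax.trans hxb)]
    exact setIntegral_le_integral h.integrable_abs_mul_abs_deriv (.of_forall fun t => by positivity)
  linarith

lemma sq_le_integral_abs_mul_abs_deriv (h : IsH1 u u') (x : ℝ) :
    u x ^ 2 ≤ ∫ t, |u t| * |u' t| := by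
  -- Otherwise the integrable function `s ↦ u(x - s)² + u(x + s)²` is at least some `c > 0`
  -- for all `s ≥ 0`.
  by_contra! hlt
  set c := 2 * (u x ^ 2 - ∫ t, |u t| * |u' t|)
  have hsum : Integrable fun s => u (x - s) ^ 2 + u (x + s) ^ 2 :=
    (h.2.1.comp_sub_left x).add (h.2.1.comp_add_left x)
  have hsub : Ici 0 ⊆ {s | c ≤ u (x - s) ^ 2 + u (x + s) ^ 2} := fun s (hs : 0 ≤ s) => by
    have := h.two_mul_sq_le (sub_le_self x hs) (le_add_of_nonneg_right hs)
    rw [mem_ofPred_eq]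
    linarith
  have hfinite := (measure_mono hsub).trans_lt (hsum.measure_ge_lt_top (by linarith))
  simp at hfinite

theorem pow_four_le_mass_mul_mass (h : IsH1 u u') (x : ℝ) : u x ^ 4 ≤ mass u * mass u' := by
  calc u x ^ 4 = (u x ^ 2) ^ 2 := by ring
    _ ≤ (∫ t, |u t| * |u' t|) ^ 2 := by gcongr; exact h.sq_le_integral_abs_mul_abs_deriv x
    _ ≤ mass u * mass u' := by
      simpa only [mass, abs_abs, sq_abs] using sq_integral_abs_mul_abs_le h.memLp h.memLp_abs_deriv

theorem half_one_sub_mul_mass_le_Dfun_four (h : IsH1 u u') :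
    1 / 2 * (1 - mass u / 2) * mass u' ≤ Dfun 4 u u' := by
  rw [Dfun_four]
  linarith [h.pow_four_le_mass_mul_mass 0]

theorem Dfun_four_nonneg (h : IsH1 u u') (hmass : mass u ≤ 2) : 0 ≤ Dfun 4 u u' :=
  (mul_nonneg (by linarith) (mass_nonneg u')).trans h.half_one_sub_mul_mass_le_Dfun_four

lemma mul_comp_mul_left (h : IsH1 u u') (c : ℝ) {t : ℝ} (ht : t ≠ 0) :
    IsH1 (fun x => c * u (t * x)) (fun x => c * t * u' (t * x)) := by
  have hcont := h.1
  refine ⟨by fun_prop, ?_, ?_, fun a b _ => ?_⟩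
  · simpa only [mul_pow _ (u _)] using (h.2.1.comp_mul_left' ht).const_mul (c ^ 2)
  · simpa only [mul_pow _ (u' _)] using (h.2.2.1.comp_mul_left' ht).const_mul ((c * t) ^ 2)
  · rw [intervalIntegral.integral_const_mul, mul_assoc, ← smul_eq_mul t,
      intervalIntegral.smul_integral_comp_mul_left, ← h.sub_eq_integral, mul_sub]

theorem exists_mass_eq_mass_deriv_lt (h : IsH1 u u') {ε : ℝ} (hε : 0 < ε) :
    ∃ v v' : ℝ → ℝ, IsH1 v v' ∧ mass v = mass u ∧ mass v' < ε := by
  obtain ⟨s, hs, hlt⟩ := exists_pos_mul_lt hε (mass u')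
  have ht : 0 < √s := Real.sqrt_pos.mpr hs
  refine ⟨_, _, h.mul_comp_mul_left √√s ht.ne', ?_, ?_⟩
  · rw [mass_mul_comp_mul_left, Real.sq_sqrt ht.le, abs_of_pos ht, mul_inv_cancel₀ ht.ne', one_mul]
  · rw [mass_mul_comp_mul_left, mul_pow, Real.sq_sqrt ht.le, Real.sq_sqrt hs.le, abs_of_pos ht]
    field_simp
    linarith

end IsH1

lemma isH1_deriv_of_contDiff_of_hasCompactSupport {f : ℝ → ℝ}
    (hf : ContDiff ℝ 1 f) (hsupp : HasCompactSupport f) : IsH1 f (deriv f) := by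
  have hcont' : Continuous (deriv f) := hf.continuous_deriv le_rfl
  refine ⟨hf.continuous, ?_, ?_, fun a b _ => ?_⟩
  · exact (hf.continuous.memLp_of_hasCompactSupport hsupp).integrable_sq
  · exact (hcont'.memLp_of_hasCompactSupport hsupp.deriv).integrable_sq
  · exact (intervalIntegral.integral_deriv_eq_sub
      (fun x _ => hf.differentiable one_ne_zero x) (hcont'.intervalIntegrable a b)).symm

lemma exists_isH1_mass_pos : ∃ u u' : ℝ → ℝ, IsH1 u u' ∧ 0 < mass u := by
  let f : ContDiffBump (0 : ℝ) := ⟨1, 2, one_pos, one_lt_two⟩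
  have hf : IsH1 f (deriv f) :=
    isH1_deriv_of_contDiff_of_hasCompactSupport f.contDiff f.hasCompactSupport
  have hf0 : f 0 = 1 := f.one_of_mem_closedBall (Metric.mem_closedBall_self zero_le_one)
  refine ⟨f, deriv f, hf, ?_⟩
  exact integral_pos_of_integrable_nonneg_nonzero (x := 0) (hf.1.pow 2) hf.2.1
    (fun x => sq_nonneg (f x)) (by simp [hf0])

theorem exists_isH1_mass_eq {m : ℝ} (hm : 0 ≤ m) : ∃ u u' : ℝ → ℝ, IsH1 u u' ∧ mass u = m := by
  obtain ⟨u, u', hu, hpos⟩ := exists_isH1_mass_pos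
  refine ⟨_, _, hu.mul_comp_mul_left √(m / mass u) one_ne_zero, ?_⟩
  rw [mass_mul_comp_mul_left, Real.sq_sqrt (by positivity), abs_one, inv_one, mul_one,
    div_mul_cancel₀ _ hpos.ne']

theorem stmt2 (μ : ℝ) (hμ : 0 < μ) (hμ' : μ ≤ 2) :
    (∀ u u' : ℝ → ℝ, IsH1 u u' → mass u = μ → 0 ≤ Dfun 4 u u') ∧
    (∀ ε : ℝ, 0 < ε → ∃ u u' : ℝ → ℝ, IsH1 u u' ∧ mass u = μ ∧ Dfun 4 u u' < ε) := by
  refine ⟨fun u u' hu hmass => hu.Dfun_four_nonneg (hmass.trans_le hμ'), fun ε hε => ?_⟩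
  obtain ⟨w, w', hw, hmass_w⟩ := exists_isH1_mass_eq hμ.le
  obtain ⟨u, u', hu, hmass_u, hlt⟩ := hw.exists_mass_eq_mass_deriv_lt hε
  refine ⟨u, u', hu, hmass_u.trans hmass_w, ?_⟩
  calc Dfun 4 u u' ≤ 1 / 2 * mass u' := Dfun_le_half_mass zero_le_four u u'
    _ < ε := by linarith [mass_nonneg u']
end
end
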